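/- For every even integer D ≥ 2, letting J denote the D×D block matrix [[0, I_{D/2}], [−I_{D/2}, 0]], the Haar integral over the unitary group satisfies ∫_{U(D)} |tr(U J Uᵀ J)|² dU = 2D/(D−1), where Uᵀ denotes the transpose of U (not the conjugate transpose) and tr is the matrix trace. -/

import Mathlib

open MeasureTheory Matrix

noncomputable instance {m n : Type*} : MeasurableSpace (Matrix m n ℂ) :=
  inferInstanceAs (MeasurableSpace (m → n → ℂ))

/-- The `D×D` canonical symplectic form `J = [[0, I_{D/2}], [−I_{D/2}, 0]]`
(for `D` even), written entrywise. -/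
def Jmat (D : ℕ) : Matrix (Fin D) (Fin D) ℂ :=
  fun i j =>
    if (j : ℕ) = (i : ℕ) + D / 2 then 1
    else if (i : ℕ) = (j : ℕ) + D / 2 then -1
    else 0

/-! The action `A ↦ U A Uᵀ` of `U(n)` on antisymmetric matrices is the representation `Λ² ℂⁿ`, which
is irreducible of dimension `n (n - 1) / 2`, so the integral is an instance of Schur orthogonality.
The matrix coefficients are accessible by hand: a sign change of one coordinate kills the
expectation of `(U A Uᵀ)ᵢⱼ` times the conjugate of `(U A' Uᵀ)ₖₗ` unless `{i, j} = {k, l}`,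
permutations of the coordinates make the remaining ones equal up to sign, and their total is the
invariant `tr (A A'ᴴ)`. -/

instance {m n : Type*} [Countable m] [Countable n] : BorelSpace (Matrix m n ℂ) :=
  inferInstanceAs (BorelSpace (m → n → ℂ))

open scoped Matrix.Norms.Frobenius in
lemma trace_mul_conjTranspose_self {m n 𝕜 : Type*} [Fintype m] [Fintype n] [RCLike 𝕜]
    (A : Matrix m n 𝕜) : (A * Aᴴ).trace = (‖A‖ ^ 2 : ℝ) := by
  rw [frobenius_norm_def, ← Real.sqrt_eq_rpow, Real.sq_sqrt (by positivity)]
  simp [trace, mul_apply, RCLike.mul_conj]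

lemma integral_sum_sum {α ι κ E : Type*} [Fintype ι] [Fintype κ] [MeasurableSpace α]
    {μ : Measure α} [NormedAddCommGroup E] [NormedSpace ℝ E] {f : ι → κ → α → E}
    (hf : ∀ i j, Integrable (f i j) μ) :
    ∫ a, ∑ i, ∑ j, f i j a ∂μ = ∑ i, ∑ j, ∫ a, f i j a ∂μ := by
  rw [integral_finsetSum _ fun i _ => integrable_finsetSum _ fun j _ => hf i j]
  exact Finset.sum_congr rfl fun i _ => integral_finsetSum _ fun j _ => hf i j

section Haar

variable {n : Type*} [Fintype n] [DecidableEq n]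

/-- The action `A ↦ U A Uᵀ` of the unitary group on square matrices by congruence, whose
matrix coefficients are integrated below. -/
def unitaryCongr (U : unitaryGroup n ℂ) (A : Matrix n n ℂ) : Matrix n n ℂ := U.1 * A * U.1ᵀ

lemma unitaryCongr_mul (U V : unitaryGroup n ℂ) (A : Matrix n n ℂ) :
    unitaryCongr (U * V) A = unitaryCongr U (unitaryCongr V A) := by
  simp [unitaryCongr, Matrix.mul_assoc]

lemma continuous_unitaryCongr (A : Matrix n n ℂ) : Continuous fun U => unitaryCongr U A := by
  unfold unitaryCongr
  fun_prop

lemma unitaryCongr_apply_swap {A : Matrix n n ℂ} (hA : Aᵀ = -A) (U : unitaryGroup n ℂ) (i j : n) :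
    unitaryCongr U A j i = -unitaryCongr U A i j := by
  have h : (unitaryCongr U A)ᵀ = -unitaryCongr U A := by
    simp [unitaryCongr, hA, Matrix.mul_assoc]
  exact congr_fun₂ h i j

lemma unitaryCongr_apply_self {A : Matrix n n ℂ} (hA : Aᵀ = -A) (U : unitaryGroup n ℂ) (i : n) :
    unitaryCongr U A i i = 0 :=
  self_eq_neg.mp (unitaryCongr_apply_swap hA U i i)

lemma trace_unitaryCongr_mul_conjTranspose (U : unitaryGroup n ℂ) (A B : Matrix n n ℂ) :
    (unitaryCongr U A * (unitaryCongr U B)ᴴ).trace = (A * Bᴴ).trace := by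
  have hU : U.1ᴴ * U.1 = 1 := mem_unitaryGroup_iff'.mp U.2
  have hUT : U.1ᵀ * U.1ᵀᴴ = 1 := mem_unitaryGroup_iff.mp (UnitaryGroup.transpose U).2
  calc (unitaryCongr U A * (unitaryCongr U B)ᴴ).trace
      = (U.1 * (A * (U.1ᵀ * U.1ᵀᴴ) * Bᴴ) * U.1ᴴ).trace := by
        simp only [unitaryCongr, conjTranspose_mul, Matrix.mul_assoc]
    _ = (A * Bᴴ).trace := by
        rw [hUT, Matrix.mul_one, trace_mul_cycle, hU, Matrix.one_mul]

/-- The unitary diagonal matrix with given phases on the diagonal, used for sign changes of a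
coordinate. -/
def diagonalUnitary (d : n → unitary ℂ) : unitaryGroup n ℂ :=
  ⟨diagonal fun i => (d i : ℂ), by
    rw [mem_unitaryGroup_iff, star_eq_conjTranspose, diagonal_conjTranspose,
      diagonal_mul_diagonal, ← diagonal_one]
    exact congrArg diagonal (funext fun i => Unitary.coe_mul_star_self (d i))⟩

lemma unitaryCongr_diagonalUnitary_apply (d : n → unitary ℂ) (A : Matrix n n ℂ) (i j : n) :
    unitaryCongr (diagonalUnitary d) A i j = d i * A i j * d j := by
  simp [unitaryCongr, diagonalUnitary]

/-- The permutation matrix of `σ` as an element of the unitary group, used for permuting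
matrix coefficients: `permUnitary σ` moves the entry at `(σ i, σ j)` to `(i, j)`. -/
def permUnitary (σ : Equiv.Perm n) : unitaryGroup n ℂ :=
  ⟨σ.permMatrix ℂ, by
    rw [mem_unitaryGroup_iff, star_eq_conjTranspose, conjTranspose_permMatrix, ← permMatrix_mul,
      inv_mul_cancel, permMatrix_one]⟩

lemma unitaryCongr_permUnitary_apply (σ : Equiv.Perm n) (A : Matrix n n ℂ) (i j : n) :
    unitaryCongr (permUnitary σ) A i j = A (σ i) (σ j) := by
  rw [unitaryCongr, permUnitary, transpose_permMatrix, PEquiv.toMatrix_toPEquiv_mul,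
    PEquiv.mul_toMatrix_toPEquiv]
  rfl

instance : CompactSpace (unitaryGroup n ℂ) := by
  have hpoly : IsCompact (X := Matrix n n ℂ)
      (Set.univ.pi fun _ => Set.univ.pi fun _ => Metric.closedBall 0 1) :=
    isCompact_univ_pi fun _ => isCompact_univ_pi fun _ => isCompact_closedBall 0 1
  exact isCompact_iff_compactSpace.mp <| hpoly.of_isClosed_subset isClosed_unitary
    fun _ hU i _ j _ => mem_closedBall_zero_iff.mpr (entry_norm_bound_of_unitary hU i j)

variable {μ : Measure (unitaryGroup n ℂ)}

lemma integral_unitaryCongr_unitaryCongr [μ.IsMulLeftInvariant]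
    (f : Matrix n n ℂ → Matrix n n ℂ → ℂ) (A A' : Matrix n n ℂ) (V : unitaryGroup n ℂ) :
    ∫ U, f (unitaryCongr V (unitaryCongr U A)) (unitaryCongr V (unitaryCongr U A')) ∂μ =
      ∫ U, f (unitaryCongr U A) (unitaryCongr U A') ∂μ := by
  simpa only [unitaryCongr_mul] using
    integral_mul_left_eq_self (fun U => f (unitaryCongr U A) (unitaryCongr U A')) V

lemma integrable_unitaryCongr_mul_star [IsFiniteMeasure μ] (A A' : Matrix n n ℂ) (i j k l : n) :
    Integrable (fun U => unitaryCongr U A i j * star (unitaryCongr U A' k l)) μ := by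
  have hcont := continuous_unitaryCongr A
  have hcont' := continuous_unitaryCongr A'
  exact Continuous.integrable_of_hasCompactSupport (by fun_prop) (.of_compactSpace _)

lemma integral_unitaryCongr_mul_star_perm [μ.IsMulLeftInvariant] (A A' : Matrix n n ℂ)
    (σ : Equiv.Perm n) (i j k l : n) :
    ∫ U, unitaryCongr U A (σ i) (σ j) * star (unitaryCongr U A' (σ k) (σ l)) ∂μ =
      ∫ U, unitaryCongr U A i j * star (unitaryCongr U A' k l) ∂μ := by
  simpa only [unitaryCongr_permUnitary_apply] using
    integral_unitaryCongr_unitaryCongr (fun X Y => X i j * star (Y k l)) A A' (permUnitary σ)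

lemma integral_unitaryCongr_mul_star_eq_zero_of_phase [μ.IsMulLeftInvariant] (A A' : Matrix n n ℂ)
    {i j k l : n} (d : n → unitary ℂ) (hd : d i * d j * star (d k * d l) = -1) :
    ∫ U, unitaryCongr U A i j * star (unitaryCongr U A' k l) ∂μ = 0 := by
  have hd' : d i * d j * star (d k * d l : ℂ) = -1 := congrArg Subtype.val hd
  have h := integral_unitaryCongr_unitaryCongr (μ := μ) (fun X Y => X i j * star (Y k l)) A A'
    (diagonalUnitary d)
  have hphase (X Y : Matrix n n ℂ) : d i * X i j * d j * star (d k * Y k l * d l : ℂ) =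
      -(X i j * star (Y k l)) := by
    rw [← neg_one_mul, ← hd']
    simp only [star_mul']
    ring
  simp only [unitaryCongr_diagonalUnitary_apply, hphase, integral_neg] at h
  exact self_eq_neg.mp h.symm

lemma integral_unitaryCongr_mul_star_eq_zero [μ.IsMulLeftInvariant] (A A' : Matrix n n ℂ)
    {i j k l : n} (hij : i ≠ j) (h : i ≠ k ∧ i ≠ l ∨ j ≠ k ∧ j ≠ l) :
    ∫ U, unitaryCongr U A i j * star (unitaryCongr U A' k l) ∂μ = 0 := by
  rcases h with ⟨hk, hl⟩ | ⟨hk, hl⟩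
  · refine integral_unitaryCongr_mul_star_eq_zero_of_phase A A' (Function.update 1 i (-1)) ?_
    simp [hij.symm, hk.symm, hl.symm]
  · refine integral_unitaryCongr_mul_star_eq_zero_of_phase A A' (Function.update 1 j (-1)) ?_
    simp [hij, hk.symm, hl.symm]

lemma sum_integral_unitaryCongr_mul_star [IsProbabilityMeasure μ] (A A' : Matrix n n ℂ) :
    ∑ i, ∑ j, ∫ U, unitaryCongr U A i j * star (unitaryCongr U A' i j) ∂μ = (A * A'ᴴ).trace := by
  have hint (i j : n) := integrable_unitaryCongr_mul_star (μ := μ) A A' i j i j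
  have htrace (U : unitaryGroup n ℂ) :
      ∑ i, ∑ j, unitaryCongr U A i j * star (unitaryCongr U A' i j) = (A * A'ᴴ).trace := by
    rw [← trace_unitaryCongr_mul_conjTranspose U]
    rfl
  rw [← integral_sum_sum hint]
  simp only [htrace, integral_const, probReal_univ, one_smul]

variable [μ.IsMulLeftInvariant] [IsProbabilityMeasure μ] {A : Matrix n n ℂ}

lemma card_mul_pred_mul_integral_unitaryCongr_mul_star_self (hA : Aᵀ = -A) (A' : Matrix n n ℂ)
    {i j : n} (hij : i ≠ j) :
    (Fintype.card n * (Fintype.card n - 1) : ℂ) *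
      ∫ U, unitaryCongr U A i j * star (unitaryCongr U A' i j) ∂μ = (A * A'ᴴ).trace := by
  set c := ∫ U, unitaryCongr U A i j * star (unitaryCongr U A' i j) ∂μ
  have hconst (k l : n) : ∫ U, unitaryCongr U A k l * star (unitaryCongr U A' k l) ∂μ =
      c - if k = l then c else 0 := by
    rcases eq_or_ne k l with rfl | hkl
    · simp [unitaryCongr_apply_self hA]
    · obtain ⟨σ, rfl, rfl⟩ := MulAction.is_two_pretransitive_iff.mp
        (Equiv.Perm.isMultiplyPretransitive n 2) hij hkl
      rw [if_neg hkl, sub_zero]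
      exact integral_unitaryCongr_mul_star_perm A A' σ i j i j
  have hsum := sum_integral_unitaryCongr_mul_star (μ := μ) A A'
  simp only [hconst, Finset.sum_sub_distrib, Finset.sum_const, Finset.card_univ, nsmul_eq_mul,
    Finset.sum_ite_eq, Finset.mem_univ, if_true] at hsum
  linear_combination hsum

lemma card_mul_pred_mul_integral_unitaryCongr_mul_star (hA : Aᵀ = -A) (A' : Matrix n n ℂ)
    (i j k l : n) :
    (Fintype.card n * (Fintype.card n - 1) : ℂ) *
      ∫ U, unitaryCongr U A i j * star (unitaryCongr U A' k l) ∂μ =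
    (A * A'ᴴ).trace *
      ((if i = k ∧ j = l then 1 else 0) - (if i = l ∧ j = k then 1 else 0)) := by
  rcases eq_or_ne i j with rfl | hij
  · simp [unitaryCongr_apply_self hA, and_comm]
  by_cases hsame : i = k ∧ j = l
  · obtain ⟨rfl, rfl⟩ := hsame
    rw [card_mul_pred_mul_integral_unitaryCongr_mul_star_self hA A' hij]
    simp [hij]
  by_cases hswap : i = l ∧ j = k
  · obtain ⟨rfl, rfl⟩ := hswap
    simp_rw [unitaryCongr_apply_swap hA _ j i, neg_mul, integral_neg, mul_neg,
      card_mul_pred_mul_integral_unitaryCongr_mul_star_self hA A' hij.symm]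
    simp [hij]
  · rw [integral_unitaryCongr_mul_star_eq_zero A A' hij (by grind)]
    simp [hsame, hswap]

lemma card_mul_pred_mul_integral_trace_unitaryCongr_mul_star_apply (hA : Aᵀ = -A)
    (A' : Matrix n n ℂ) {B : Matrix n n ℂ} (hB : Bᵀ = -B) (k l : n) :
    (Fintype.card n * (Fintype.card n - 1) : ℂ) *
      ∫ U, (unitaryCongr U A * B).trace * star (unitaryCongr U A' k l) ∂μ =
    2 * (A * A'ᴴ).trace * B l k := by
  have hint (i j : n) :=
    (integrable_unitaryCongr_mul_star (μ := μ) A A' i j k l).mul_const (B j i)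
  have hBkl : B k l = -B l k := congr_fun₂ hB l k
  have hexpand (U : unitaryGroup n ℂ) :
      (unitaryCongr U A * B).trace = ∑ i, ∑ j, unitaryCongr U A i j * B j i := rfl
  simp_rw [hexpand, Finset.sum_mul, mul_right_comm _ (B _ _)]
  simp_rw [integral_sum_sum hint, integral_mul_const, Finset.mul_sum,
    ← mul_assoc, card_mul_pred_mul_integral_unitaryCongr_mul_star hA]
  simp only [ite_and, mul_sub, sub_mul, Finset.sum_sub_distrib, mul_ite, ite_mul, mul_one, mul_zero,
    zero_mul, Finset.sum_ite_eq', Finset.sum_ite_irrel, Finset.sum_const_zero, Finset.mem_univ,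
    if_true, hBkl]
  ring

theorem card_mul_pred_mul_integral_trace_unitaryCongr_mul_star_trace (hA : Aᵀ = -A)
    (A' : Matrix n n ℂ) {B : Matrix n n ℂ} (hB : Bᵀ = -B) (B' : Matrix n n ℂ) :
    (Fintype.card n * (Fintype.card n - 1) : ℂ) *
      ∫ U, (unitaryCongr U A * B).trace * star (unitaryCongr U A' * B').trace ∂μ =
    2 * (A * A'ᴴ).trace * (B * B'ᴴ).trace := by
  have hint (k l : n) : Integrable (fun U => (unitaryCongr U A * B).trace *
      star (unitaryCongr U A' k l) * star (B' l k)) μ := by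
    have hcont := continuous_unitaryCongr A
    have hcont' := continuous_unitaryCongr A'
    exact Continuous.integrable_of_hasCompactSupport (by fun_prop) (.of_compactSpace _)
  have hexpand (U : unitaryGroup n ℂ) : star (unitaryCongr U A' * B').trace =
      ∑ k, ∑ l, star (unitaryCongr U A' k l) * star (B' l k) := by
    simp only [trace, diag_apply, mul_apply, star_sum, star_mul']
  simp_rw [hexpand, Finset.mul_sum, ← mul_assoc]
  simp_rw [integral_sum_sum hint, integral_mul_const, Finset.mul_sum,
    ← mul_assoc, card_mul_pred_mul_integral_trace_unitaryCongr_mul_star_apply hA A' hB]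
  rw [Finset.sum_comm]
  simp only [trace, diag_apply, mul_apply, conjTranspose_apply, Finset.mul_sum, mul_assoc]

open scoped Matrix.Norms.Frobenius in
theorem haar_integral_abs_tr_UJUtJ_sq_general [Nontrivial n] (hA : Aᵀ = -A) {B : Matrix n n ℂ}
    (hB : Bᵀ = -B) :
    ∫ U, ‖(U.1 * A * U.1ᵀ * B).trace‖ ^ 2 ∂μ =
      2 * ‖A‖ ^ 2 * ‖B‖ ^ 2 / (Fintype.card n * (Fintype.card n - 1)) := by
  have hcard : (Fintype.card n : ℝ) * (Fintype.card n - 1) ≠ 0 :=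
    mul_ne_zero (by simp) (sub_ne_zero.mpr (by exact_mod_cast Fintype.one_lt_card.ne'))
  have h := card_mul_pred_mul_integral_trace_unitaryCongr_mul_star_trace (μ := μ) hA A hB B
  simp only [trace_mul_conjTranspose_self, Complex.star_def, Complex.mul_conj'] at h
  rw [eq_div_iff hcard, mul_comm]
  apply Complex.ofReal_injective
  push_cast
  rw [← integral_complex_ofReal]
  exact_mod_cast h

end Haar

lemma Jmat_add_self (h : ℕ) :
    Jmat (h + h) = reindex finSumFinEquiv finSumFinEquiv (-J (Fin h) ℂ) := by
  rw [← Equiv.symm_apply_eq]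
  have half : (h + h) / 2 = h := by omega
  ext (i | i) (j | j) <;>
    simp only [reindex_symm, reindex_apply, Equiv.symm_symm, submatrix_apply,
      finSumFinEquiv_apply_left, finSumFinEquiv_apply_right, Fin.val_castAdd, Fin.val_natAdd,
      Jmat, half, J, Matrix.neg_apply, fromBlocks_apply₁₁, fromBlocks_apply₁₂, fromBlocks_apply₂₁,
      fromBlocks_apply₂₂, Matrix.zero_apply, one_apply, Fin.ext_iff] <;>
    grind

lemma Jmat_transpose {D : ℕ} (hD : Even D) : (Jmat D)ᵀ = -Jmat D := by
  obtain ⟨h, rfl⟩ := hD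
  rw [Jmat_add_self, transpose_reindex, transpose_neg, J_transpose]
  rfl

lemma Jmat_mul_conjTranspose {D : ℕ} (hD : Even D) : Jmat D * (Jmat D)ᴴ = 1 := by
  obtain ⟨h, rfl⟩ := hD
  have hJ : (J (Fin h) ℂ)ᴴ = -J (Fin h) ℂ := by
    rw [conjTranspose, J_transpose, Matrix.map_neg _ star_neg]
    exact congrArg Neg.neg (map_J (Fin h) (starRingEnd ℂ))
  simp [Jmat_add_self, conjTranspose_submatrix, submatrix_mul_equiv, hJ, J_squared]

open scoped Matrix.Norms.Frobenius in
lemma frobenius_norm_Jmat_sq {D : ℕ} (hD : Even D) : ‖Jmat D‖ ^ 2 = D := by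
  have h := trace_mul_conjTranspose_self (Jmat D)
  rw [Jmat_mul_conjTranspose hD, trace_one, Fintype.card_fin] at h
  exact Complex.ofReal_injective (by simpa using h.symm)

/-- For every even `D ≥ 2`, the Haar integral over the unitary group
satisfies `∫_{U(D)} |tr(U J Uᵀ J)|² dU = 2D/(D−1)`. -/
theorem haar_integral_abs_tr_UJUtJ_sq :
    ∀ (D : ℕ), 2 ≤ D → Even D →
    ∀ (μ : Measure ↥(Matrix.unitaryGroup (Fin D) ℂ)),
      μ.IsHaarMeasure → IsProbabilityMeasure μ →
      ∫ U, ‖((U.1 * Jmat D * (U.1)ᵀ * Jmat D).trace)‖ ^ 2 ∂μ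
        = 2 * (D : ℝ) / ((D : ℝ) - 1) := by
  intro D hD hev μ _ _
  have : Nontrivial (Fin D) := Fin.nontrivial_iff_two_le.mpr hD
  rw [haar_integral_abs_tr_UJUtJ_sq_general (Jmat_transpose hev) (Jmat_transpose hev),
    frobenius_norm_Jmat_sq hev, Fintype.card_fin]
  field_simp
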